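/- Let p and q be finite probability vectors. If H_α(p) < H_α(q) for every α ∈ [0, ∞] (Rényi entropies, including H₀, the Shannon entropy H₁, and H_∞), then there exists N such that for every n ≥ N, p^{⊗n} majorizes q^{⊗n}. Conversely, if p^{⊗n} majorizes q^{⊗n} for some n ≥ 1, then H_α(p) ≤ H_α(q) for every α ∈ [0, ∞]. -/

import Mathlib

open scoped BigOperators NNReal

noncomputable section

/-- A probability vector on a finite index type. -/
def IsProbVec {ι : Type*} [Fintype ι] (p : ι → ℝ) : Prop :=
  (∀ i, 0 ≤ p i) ∧ ∑ i, p i = 1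

/-- A (column-)stochastic matrix: nonnegative entries, every column sums to `1`. -/
def IsStochastic {ι κ : Type*} [Fintype ι] [Fintype κ] (T : ι → κ → ℝ) : Prop :=
  (∀ i j, 0 ≤ T i j) ∧ ∀ j, ∑ i, T i j = 1

/-- Matrix–vector multiplication. -/
def matVec {ι κ : Type*} [Fintype κ] (T : ι → κ → ℝ) (v : κ → ℝ) : ι → ℝ :=
  fun i => ∑ j, T i j * v j

/-- Kronecker product of two vectors. -/
def kron {ι κ : Type*} (p : ι → ℝ) (q : κ → ℝ) : ι × κ → ℝ :=
  fun x => p x.1 * q x.2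

/-- `n`-fold Kronecker power of a vector. -/
def kpow {ι : Type*} (p : ι → ℝ) (n : ℕ) : (Fin n → ι) → ℝ :=
  fun f => ∏ j, p (f j)

/-- Kronecker product reindexed along `Fin (m * n)`. -/
def kronFin {m n : ℕ} (p : Fin m → ℝ) (q : Fin n → ℝ) : Fin (m * n) → ℝ :=
  fun i => kron p q (finProdFinEquiv.symm i)

/-- The sum of the `k` largest entries of a nonnegative vector, expressed as the
largest sum over subsets of cardinality at most `k`. -/
def topSum {ι : Type*} [Fintype ι] (p : ι → ℝ) (k : ℕ) : ℝ :=
  ⨆ s ∈ {s : Finset ι | s.card ≤ k}, ∑ i ∈ s, p i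

/-- Majorization for nonnegative vectors (possibly of different lengths):
equal total sums, and for each `k` the sum of the `k` largest entries of `p` is
at least that of `q`. -/
def Majorizes {ι κ : Type*} [Fintype ι] [Fintype κ] (p : ι → ℝ) (q : κ → ℝ) : Prop :=
  (∑ i, p i = ∑ j, q j) ∧ ∀ k : ℕ, topSum q k ≤ topSum p k

/-- The size of the support, `‖p‖₀`. -/
def supp0 {ι : Type*} [Fintype ι] (p : ι → ℝ) : ℕ :=
  (Finset.univ.filter fun i => p i ≠ 0).card

/-- Entrywise nonnegativity. -/
def NonnegVec {n : ℕ} (p : Fin n → ℝ) : Prop := ∀ i, 0 ≤ p i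

/-- The modified majorization preorder `≽₀,₁`: majorization plus equality of
support sizes. -/
def MajMod {ι κ : Type*} [Fintype ι] [Fintype κ] (p : ι → ℝ) (q : κ → ℝ) : Prop :=
  Majorizes p q ∧ supp0 p = supp0 q

/-- `f_α(p) = ∑_{i ∈ supp p} (p i)^α`. -/
def fA {ι : Type*} [Fintype ι] (α : ℝ) (p : ι → ℝ) : ℝ :=
  ∑ i, if p i = 0 then 0 else p i ^ α

/-- Shannon entropy (the terms with `p i = 0` vanish). -/
def H1ent {ι : Type*} [Fintype ι] (p : ι → ℝ) : ℝ := -∑ i, p i * Real.log (p i)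

/-- `H₀'(p) = ∑_{i ∈ supp p} log p_i`. -/
def H0' {ι : Type*} [Fintype ι] (p : ι → ℝ) : ℝ :=
  ∑ i, if p i = 0 then 0 else Real.log (p i)

/-- Rényi entropy of order `α` (with `α = 1` the Shannon entropy). -/
def Hent {ι : Type*} [Fintype ι] (α : ℝ) (p : ι → ℝ) : ℝ :=
  if α = 1 then -∑ i, p i * Real.log (p i)
  else (1 / (1 - α)) * Real.log (∑ i, if p i = 0 then 0 else p i ^ α)

/-- Min-entropy `H_∞(p) = - log max_i p_i`. -/
def HentInf {ι : Type*} [Fintype ι] (p : ι → ℝ) : ℝ := -Real.log (⨆ i, p i)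

/-- Kullback–Leibler divergence (the terms with `p i = 0` vanish). -/
def KL {n : ℕ} (p q : Fin n → ℝ) : ℝ :=
  ∑ i, p i * Real.log (p i / q i)

/-- Rényi divergence of order `α` for vectors with common support. -/
def Renyi {n : ℕ} (α : ℝ) (p q : Fin n → ℝ) : ℝ :=
  if α = 1 then ∑ i, p i * Real.log (p i / q i)
  else (1 / (α - 1)) * Real.log (∑ i, if p i = 0 then 0 else p i ^ α * q i ^ (1 - α))

/-- Max-divergence `D_∞(p‖q) = max_{i ∈ supp q} log (p_i / q_i)`. -/
def RenyiInf {n : ℕ} (p q : Fin n → ℝ) : ℝ :=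
  ⨆ i ∈ Finset.univ.filter (fun i => q i ≠ 0), Real.log (p i / q i)

/-- Rényi divergence with values in the extended reals `[0, ∞]`. -/
def RenyiE {n : ℕ} (α : ℝ) (p q : Fin n → ℝ) : EReal :=
  if α = 1 then
    (if ∀ i, p i ≠ 0 → q i ≠ 0 then ((∑ i, p i * Real.log (p i / q i) : ℝ) : EReal) else ⊤)
  else if α < 1 then
    (if ∃ i, p i ≠ 0 ∧ q i ≠ 0 then
      (((1 / (α - 1)) *
        Real.log (∑ i, if p i = 0 ∨ q i = 0 then 0 else p i ^ α * q i ^ (1 - α)) : ℝ) : EReal)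
    else (⊤ : EReal))
  else
    (if ∀ i, p i ≠ 0 → q i ≠ 0 then
      (((1 / (α - 1)) *
        Real.log (∑ i, if p i = 0 then 0 else p i ^ α * q i ^ (1 - α)) : ℝ) : EReal)
    else (⊤ : EReal))

/-- The common support of a tuple of vectors. -/
def suppIdx {d n : ℕ} (P : Fin d → Fin n → ℝ) : Finset (Fin n) :=
  Finset.univ.filter fun i => ∃ k, P k i ≠ 0

/-- `f_α(P) = ∑_{i ∈ I} ∏_k (p_i^{(k)})^{α_k}` with `I` the common support. -/
def fMat {d n : ℕ} (α : Fin d → ℝ) (P : Fin d → Fin n → ℝ) : ℝ :=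
  ∑ i ∈ suppIdx P, ∏ k, P k i ^ α k

/-- The matrix `α`-divergence `D_α`. -/
def Dmat {d n : ℕ} (α : Fin d → ℝ) (P : Fin d → Fin n → ℝ) : ℝ :=
  (1 / ((⨆ k, α k) - 1)) * Real.log (∑ i ∈ suppIdx P, ∏ k, P k i ^ α k)

/-- The tropical matrix divergence `D^𝕋_β`. -/
def DmatT {d n : ℕ} (β : Fin d → ℝ) (P : Fin d → Fin n → ℝ) : ℝ :=
  (1 / (⨆ k, β k)) * Real.log (⨆ i ∈ suppIdx P, ∏ k, P k i ^ β k)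

/-- Membership in `A₊`: entries summing to `1`, all nonnegative. -/
def memAplus {d : ℕ} (α : Fin d → ℝ) : Prop := (∑ k, α k = 1) ∧ ∀ k, 0 ≤ α k

/-- Membership in `A₋`: entries summing to `1`, one entry `≥ 1`, the others `≤ 0`. -/
def memAminus {d : ℕ} (α : Fin d → ℝ) : Prop :=
  (∑ k, α k = 1) ∧ ∃ k, 1 ≤ α k ∧ ∀ l, l ≠ k → α l ≤ 0

/-- Membership in `B₋`: entries summing to `0`, one entry `≥ 0`, the others `≤ 0`. -/
def memBminus {d : ℕ} (β : Fin d → ℝ) : Prop :=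
  (∑ k, β k = 0) ∧ ∃ k, 0 ≤ β k ∧ ∀ l, l ≠ k → β l ≤ 0

/-- `α` is none of the standard basis vectors `e₁, …, e_d`. -/
def notBasis {d : ℕ} (α : Fin d → ℝ) : Prop := ∀ k, α ≠ Pi.single k 1

/-- ℓ¹-distance of two vectors, padding with zeros to a common length. -/
def l1PadDist {m n : ℕ} (p : Fin m → ℝ) (q : Fin n → ℝ) : ℝ :=
  ∑ i : Fin (max m n),
    |(if h : (i : ℕ) < m then p ⟨(i : ℕ), h⟩ else 0) -
      (if h : (i : ℕ) < n then q ⟨(i : ℕ), h⟩ else 0)|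

/-- Index type of the direct sum `⨁_{s=0}^{n-1} p^{⊗(n-1-s)} ⊗ q^{⊗s}`. -/
abbrev TrickIdx (m m' n : ℕ) : Type :=
  Σ s : Fin n, (Fin (n - 1 - (s : ℕ)) → Fin m) × (Fin (s : ℕ) → Fin m')

/-- The standard catalyst `(1/n) ⨁_{s=0}^{n-1} p^{⊗(n-1-s)} ⊗ q^{⊗s}`. -/
def trick {m m' : ℕ} (p : Fin m → ℝ) (q : Fin m' → ℝ) (n : ℕ) : TrickIdx m m' n → ℝ :=
  fun x => (1 / (n : ℝ)) * (kpow p (n - 1 - (x.1 : ℕ)) x.2.1 * kpow q (x.1 : ℕ) x.2.2)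

/-- A valid tuple: nonnegative entries and common support across the tuple. -/
def TupOK {d n : ℕ} (P : Fin d → Fin n → ℝ) : Prop :=
  (∀ k i, 0 ≤ P k i) ∧ ∀ k l i, P k i ≠ 0 ↔ P l i ≠ 0

/-- Matrix majorization of tuples: a single stochastic matrix carrying each column
of `P` to the corresponding column of `Q`. -/
def TupMaj {d m n : ℕ} (P : Fin d → Fin m → ℝ) (Q : Fin d → Fin n → ℝ) : Prop :=
  ∃ T : Fin n → Fin m → ℝ, IsStochastic T ∧ ∀ k, matVec T (P k) = Q k

/-! ### Moments of product weights and Chebyshev -/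

lemma aux_sum_prod_one {ι : Type*} [Fintype ι] (w : ι → ℝ) (hs : ∑ i, w i = 1) (n : ℕ) :
    ∑ f : Fin n → ι, ∏ j, w (f j) = 1 := by
  rw [← Fintype.sum_pow, hs, one_pow]

lemma aux_sum_cons {ι : Type*} [Fintype ι] (n : ℕ) (G : (Fin (n + 1) → ι) → ℝ) :
    ∑ f, G f = ∑ i, ∑ f : Fin n → ι, G (Fin.cons i f) := by
  rw [← Fintype.sum_prod_type']
  exact (Fintype.sum_equiv (Fin.consEquiv (fun _ => ι)) _ _ (fun x => rfl)).symm

lemma aux_first_moment {ι : Type*} [Fintype ι] (w b : ι → ℝ) (hs : ∑ i, w i = 1)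
    (hb : ∑ i, w i * b i = 0) (n : ℕ) :
    ∑ f : Fin n → ι, (∏ j, w (f j)) * ∑ j, b (f j) = 0 := by
  induction n with
  | zero => simp
  | succ n ih =>
    rw [aux_sum_cons]
    simp only [Fin.prod_univ_succ, Fin.sum_univ_succ, Fin.cons_zero, Fin.cons_succ]
    have : ∀ i, ∑ f : Fin n → ι, (w i * ∏ j, w (f j)) * (b i + ∑ j, b (f j))
        = w i * b i := by
      intro i
      have h1 := aux_sum_prod_one w hs n
      calc _ = ∑ f : Fin n → ι, ((w i * b i) * (∏ j, w (f j)) +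
                w i * ((∏ j, w (f j)) * ∑ j, b (f j))) :=
              Finset.sum_congr rfl (fun f _ => by ring)
        _ = _ := by rw [Finset.sum_add_distrib, ← Finset.mul_sum, ← Finset.mul_sum, h1, ih]; ring
    simp only [this, hb]

lemma aux_second_moment {ι : Type*} [Fintype ι] (w b : ι → ℝ) (hs : ∑ i, w i = 1)
    (hb : ∑ i, w i * b i = 0) (n : ℕ) :
    ∑ f : Fin n → ι, (∏ j, w (f j)) * (∑ j, b (f j)) ^ 2 = n * ∑ i, w i * b i ^ 2 := by
  induction n with
  | zero => simp
  | succ n ih =>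
    rw [aux_sum_cons]
    simp only [Fin.prod_univ_succ, Fin.sum_univ_succ, Fin.cons_zero, Fin.cons_succ]
    have : ∀ i, ∑ f : Fin n → ι, (w i * ∏ j, w (f j)) * (b i + ∑ j, b (f j)) ^ 2
        = w i * b i ^ 2 + w i * (n * ∑ i, w i * b i ^ 2) := by
      intro i
      have h1 := aux_sum_prod_one w hs n
      have h2 := aux_first_moment w b hs hb n
      calc _ = ∑ f : Fin n → ι, ((w i * b i ^ 2) * (∏ j, w (f j)) +
                (2 * w i * b i) * ((∏ j, w (f j)) * ∑ j, b (f j)) +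
                w i * ((∏ j, w (f j)) * (∑ j, b (f j)) ^ 2)) :=
              Finset.sum_congr rfl (fun f _ => by ring)
        _ = _ := by
            rw [Finset.sum_add_distrib, Finset.sum_add_distrib, ← Finset.mul_sum,
              ← Finset.mul_sum, ← Finset.mul_sum, h1, h2, ih]; ring
    simp only [this]
    rw [Finset.sum_add_distrib, ← Finset.sum_mul, hs]
    push_cast; ring

lemma aux_cheb {ι : Type*} [Fintype ι] (w a : ι → ℝ) (hw : ∀ i, 0 ≤ w i) (hs : ∑ i, w i = 1)
    (M : ℝ) (ha : ∀ i, |a i| ≤ M) (n : ℕ) (hn : 0 < n) (ε : ℝ) (hε : 0 < ε)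
    (hnM : 2 * M ^ 2 ≤ n * ε ^ 2) (μ : ℝ) (hμ : μ = ∑ i, w i * a i) :
    1 / 2 ≤ ∑ f : Fin n → ι with |∑ j, a (f j) - n * μ| ≤ n * ε, ∏ j, w (f j) := by
  have hn' : (0 : ℝ) < n := by exact_mod_cast hn
  have hb : ∑ i, w i * (a i - μ) = 0 := by
    simp only [mul_sub, Finset.sum_sub_distrib, ← Finset.sum_mul, hs, ← hμ]; ring
  have h2 := aux_second_moment w (fun i => a i - μ) hs hb n
  have hv : ∑ i, w i * (a i - μ) ^ 2 ≤ M ^ 2 := by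
    have e : ∑ i, w i * (a i - μ) ^ 2 = ∑ i, w i * a i ^ 2 - μ ^ 2 := by
      calc _ = ∑ i, (w i * a i ^ 2 - (2 * μ) * (w i * a i) + μ ^ 2 * w i) :=
            Finset.sum_congr rfl (fun i _ => by ring)
        _ = _ := by
          rw [Finset.sum_add_distrib, Finset.sum_sub_distrib, ← Finset.mul_sum,
            ← Finset.mul_sum, hs, ← hμ]; ring
    have : ∑ i, w i * a i ^ 2 ≤ ∑ i, w i * M ^ 2 := by
      refine Finset.sum_le_sum (fun i _ => mul_le_mul_of_nonneg_left ?_ (hw i))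
      exact sq_le_sq' (by linarith [abs_le.1 (ha i)]) (abs_le.1 (ha i)).2
    rw [← Finset.sum_mul, hs] at this
    nlinarith [sq_nonneg μ]
  have hsum := aux_sum_prod_one w hs n
  rw [← Finset.sum_filter_add_sum_filter_not Finset.univ
    (fun f : Fin n → ι => |∑ j, a (f j) - n * μ| ≤ n * ε)] at hsum
  have hc : (n * ε) ^ 2 * ∑ f : Fin n → ι with ¬ |∑ j, a (f j) - n * μ| ≤ n * ε, ∏ j, w (f j)
      ≤ n * M ^ 2 := by
    calc _ ≤ ∑ f : Fin n → ι with ¬ |∑ j, a (f j) - n * μ| ≤ n * ε,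
          (∏ j, w (f j)) * (∑ j, (a (f j) - μ)) ^ 2 := by
            rw [Finset.mul_sum]
            refine Finset.sum_le_sum (fun f hf => ?_)
            rw [mul_comm]
            refine mul_le_mul_of_nonneg_left ?_ (Finset.prod_nonneg fun j _ => hw _)
            have hf' := (Finset.mem_filter.1 hf).2
            have e : ∑ j, (a (f j) - μ) = ∑ j, a (f j) - n * μ := by
              simp [Finset.sum_sub_distrib]
            rw [e, ← sq_abs (∑ j, a (f j) - n * μ)]
            push Not at hf'
            exact pow_le_pow_left₀ (by positivity) hf'.le 2
      _ ≤ ∑ f : Fin n → ι, (∏ j, w (f j)) * (∑ j, (a (f j) - μ)) ^ 2 := by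
            refine Finset.sum_le_sum_of_subset_of_nonneg (Finset.filter_subset _ _) ?_
            intro f _ _
            exact mul_nonneg (Finset.prod_nonneg fun j _ => hw _) (sq_nonneg _)
      _ ≤ _ := by rw [h2]; exact mul_le_mul_of_nonneg_left hv hn'.le
  set B := ∑ f : Fin n → ι with ¬ |∑ j, a (f j) - n * μ| ≤ n * ε, ∏ j, w (f j)
  have hB : B ≤ 1 / 2 := by
    have hp : 0 < (n * ε) ^ 2 := by positivity
    by_contra hcon
    push Not at hcon
    have : (n * ε) ^ 2 * (1 / 2) < (n * ε) ^ 2 * B := mul_lt_mul_of_pos_left hcon hp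
    nlinarith
  linarith

/-! ### Truncated sums -/

/-- `∑ (p i - t)₊`. -/
def aE {ι : Type*} [Fintype ι] (p : ι → ℝ) (t : ℝ) : ℝ := ∑ i, max (p i - t) 0

/-- `∑ min (p i) t`. -/
def aM {ι : Type*} [Fintype ι] (p : ι → ℝ) (t : ℝ) : ℝ := ∑ i, min (p i) t

lemma aE_eq {ι : Type*} [Fintype ι] (p : ι → ℝ) (t : ℝ) : aE p t = ∑ i, p i - aM p t := by
  unfold aE aM
  rw [← Finset.sum_sub_distrib]
  refine Finset.sum_congr rfl (fun i _ => ?_)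
  rcases le_total (p i) t with h | h
  · rw [max_eq_right (by linarith), min_eq_left h]; ring
  · rw [max_eq_left (by linarith), min_eq_right h]

lemma aE_anti {ι : Type*} [Fintype ι] (p : ι → ℝ) {s t : ℝ} (h : s ≤ t) : aE p t ≤ aE p s :=
  Finset.sum_le_sum fun i _ => max_le_max (by linarith) le_rfl

lemma topSum_bdd {ι : Type*} [Fintype ι] (p : ι → ℝ) (k : ℕ) :
    BddAbove (Set.range fun s : Finset ι =>
      ⨆ (_ : s ∈ {s : Finset ι | s.card ≤ k}), ∑ i ∈ s, p i) :=
  (Set.finite_range _).bddAbove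

lemma le_topSum {ι : Type*} [Fintype ι] (p : ι → ℝ) (k : ℕ) (s : Finset ι) (hs : s.card ≤ k) :
    ∑ i ∈ s, p i ≤ topSum p k := by
  refine le_trans ?_ (le_ciSup (topSum_bdd p k) s)
  rw [ciSup_pos (show s ∈ {s : Finset ι | s.card ≤ k} from hs)]

lemma topSum_le {ι : Type*} [Fintype ι] (p : ι → ℝ) (k : ℕ) (t : ℝ) (ht : 0 ≤ t) :
    topSum p k ≤ k * t + aE p t := by
  have hE : 0 ≤ aE p t := Finset.sum_nonneg fun i _ => le_max_right _ _
  refine ciSup_le fun s => ?_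
  by_cases hs : s ∈ {s : Finset ι | s.card ≤ k}
  · rw [ciSup_pos hs]
    have hs' : (s.card : ℝ) ≤ k := by exact_mod_cast hs
    calc ∑ i ∈ s, p i ≤ ∑ i ∈ s, (t + max (p i - t) 0) :=
          Finset.sum_le_sum fun i _ => by linarith [le_max_left (p i - t) 0]
      _ = s.card * t + ∑ i ∈ s, max (p i - t) 0 := by
          rw [Finset.sum_add_distrib]; simp
      _ ≤ _ := by
          refine add_le_add (mul_le_mul_of_nonneg_right hs' ht) ?_
          exact Finset.sum_le_sum_of_subset_of_nonneg (Finset.subset_univ _)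
            (fun i _ _ => le_max_right _ _)
  · have : IsEmpty (s ∈ {s : Finset ι | s.card ≤ k}) := ⟨hs⟩
    rw [Real.iSup_of_isEmpty]
    positivity

lemma topSum_ge {ι : Type*} [Fintype ι] (p : ι → ℝ) (hp : ∀ i, 0 ≤ p i) (k : ℕ) :
    ∃ t, 0 ≤ t ∧ k * t + aE p t ≤ topSum p k := by
  classical
  by_cases hk : Fintype.card ι ≤ k
  · refine ⟨0, le_rfl, ?_⟩
    refine le_trans (le_of_eq ?_) (le_topSum p k Finset.univ (by simpa using hk))
    simp [aE, hp]
  push Not at hk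
  -- the values `i` such that at most `k` entries are strictly larger
  let S : Finset ι := Finset.univ.filter fun i => (Finset.univ.filter fun j => p i < p j).card ≤ k
  have hne : (Finset.univ : Finset ι).Nonempty := by
    rw [← Finset.card_pos, Finset.card_univ]; omega
  have hS : S.Nonempty := by
    obtain ⟨i, _, hi⟩ := Finset.exists_max_image Finset.univ p hne
    refine ⟨i, Finset.mem_filter.2 ⟨Finset.mem_univ _, ?_⟩⟩
    rw [Finset.filter_false_of_mem]
    · simp
    · intro j _; exact not_lt.2 (hi j (Finset.mem_univ _))
  obtain ⟨i0, hi0, hmin⟩ := Finset.exists_min_image S p hS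
  have h1 : (Finset.univ.filter fun j => p i0 < p j).card ≤ k := (Finset.mem_filter.1 hi0).2
  have h2 : k ≤ (Finset.univ.filter fun j => p i0 ≤ p j).card := by
    by_cases hT : (Finset.univ.filter fun j => p j < p i0).Nonempty
    · obtain ⟨i1, hi1, hmax⟩ := Finset.exists_max_image _ p hT
      have hi1' := (Finset.mem_filter.1 hi1).2
      have : i1 ∉ S := fun h => absurd (hmin i1 h) (not_le.2 hi1')
      have h3 : k < (Finset.univ.filter fun j => p i1 < p j).card := by
        by_contra hcon
        exact this (Finset.mem_filter.2 ⟨Finset.mem_univ _, not_lt.1 hcon⟩)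
      refine h3.le.trans (Finset.card_le_card ?_)
      intro j hj
      have hj' := (Finset.mem_filter.1 hj).2
      refine Finset.mem_filter.2 ⟨Finset.mem_univ _, ?_⟩
      by_contra hcon
      have := hmax j (Finset.mem_filter.2 ⟨Finset.mem_univ _, not_le.1 hcon⟩)
      linarith
    · rw [Finset.not_nonempty_iff_eq_empty, Finset.filter_eq_empty_iff] at hT
      rw [Finset.filter_true_of_mem (fun j hj => not_lt.1 (hT hj)), Finset.card_univ]
      exact hk.le
  obtain ⟨s, hs1, hs2, hs3⟩ := Finset.exists_subsuperset_card_eq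
    (show (Finset.univ.filter fun j => p i0 < p j) ⊆ (Finset.univ.filter fun j => p i0 ≤ p j) from
      fun j hj => Finset.mem_filter.2 ⟨Finset.mem_univ _, (Finset.mem_filter.1 hj).2.le⟩) h1 h2
  refine ⟨p i0, hp _, le_trans (le_of_eq ?_) (le_topSum p k s hs3.le)⟩
  have e1 : aE p (p i0) = ∑ i ∈ s, max (p i - p i0) 0 := by
    refine (Finset.sum_subset (Finset.subset_univ s) ?_).symm
    intro i _ hi
    have : ¬ p i0 < p i := fun h => hi (hs1 (Finset.mem_filter.2 ⟨Finset.mem_univ _, h⟩))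
    exact max_eq_right (by linarith)
  have e2 : (k : ℝ) * p i0 = ∑ i ∈ s, p i0 := by simp [hs3]
  rw [e1, e2, ← Finset.sum_add_distrib]
  refine Finset.sum_congr rfl fun i hi => ?_
  have := (Finset.mem_filter.1 (hs2 hi)).2
  rw [max_eq_left (by linarith)]; ring

lemma majorizes_of_aE {ι κ : Type*} [Fintype ι] [Fintype κ] (p : ι → ℝ) (q : κ → ℝ)
    (hp : ∀ i, 0 ≤ p i) (hq : ∀ i, 0 ≤ q i) (hs : ∑ i, p i = ∑ j, q j)
    (h : ∀ t, 0 < t → aE q t ≤ aE p t) : Majorizes p q := by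
  refine ⟨hs, fun k => ?_⟩
  obtain ⟨t, ht, hle⟩ := topSum_ge p hp k
  refine le_trans (topSum_le q k t ht) (le_trans ?_ hle)
  rcases ht.eq_or_lt with rfl | ht
  · simp [aE, hp, hq, hs]
  · linarith [h t ht]

lemma aE_of_majorizes {ι κ : Type*} [Fintype ι] [Fintype κ] (p : ι → ℝ) (q : κ → ℝ)
    (h : Majorizes p q) (t : ℝ) (ht : 0 ≤ t) : aE q t ≤ aE p t := by
  classical
  let s : Finset κ := Finset.univ.filter fun j => t < q j
  have e : aE q t = ∑ j ∈ s, q j - s.card * t := by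
    have : ∑ j ∈ s, q j - s.card * t = ∑ j ∈ s, (q j - t) := by
      rw [Finset.sum_sub_distrib]; simp
    rw [this, Finset.sum_filter]
    refine Finset.sum_congr rfl fun j _ => ?_
    split_ifs with hj
    · exact max_eq_left (by linarith)
    · exact max_eq_right (by linarith)
  have h1 := le_topSum q s.card s le_rfl
  have h2 := h.2 s.card
  have h3 := topSum_le p s.card t ht
  linarith

/-! ### Power sums -/

/-- The summand of `fA`. -/
def gA (α x : ℝ) : ℝ := if x = 0 then 0 else x ^ α

lemma fA_eq {ι : Type*} [Fintype ι] (α : ℝ) (p : ι → ℝ) : fA α p = ∑ i, gA α (p i) := rfl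

lemma gA_of_pos {x : ℝ} (hx : 0 < x) (α : ℝ) : gA α x = x ^ α := if_neg hx.ne'

lemma gA_nonneg {x : ℝ} (hx : 0 ≤ x) (α : ℝ) : 0 ≤ gA α x := by
  unfold gA; split_ifs
  · exact le_rfl
  · positivity

lemma gA_prod {n : ℕ} (x : Fin n → ℝ) (hx : ∀ j, 0 ≤ x j) (α : ℝ) :
    gA α (∏ j, x j) = ∏ j, gA α (x j) := by
  by_cases h : ∃ j, x j = 0
  · obtain ⟨j, hj⟩ := h
    rw [Finset.prod_eq_zero (Finset.mem_univ j) hj,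
      Finset.prod_eq_zero (Finset.mem_univ j) (by simp [gA, hj])]
    simp [gA]
  · push Not at h
    have hpos : ∀ j, 0 < x j := fun j => lt_of_le_of_ne (hx j) (h j).symm
    rw [gA_of_pos (Finset.prod_pos fun j _ => hpos j),
      ← Real.finsetProd_rpow _ _ (fun j _ => hx j)]
    exact Finset.prod_congr rfl fun j _ => (gA_of_pos (hpos j) α).symm

lemma kpow_nonneg {ι : Type*} {p : ι → ℝ} (hp : ∀ i, 0 ≤ p i) (n : ℕ) (f : Fin n → ι) :
    0 ≤ kpow p n f := Finset.prod_nonneg fun _ _ => hp _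

lemma kpow_sum {ι : Type*} [Fintype ι] {p : ι → ℝ} (hp : IsProbVec p) (n : ℕ) :
    ∑ f, kpow p n f = 1 := aux_sum_prod_one p hp.2 n

lemma fA_kpow {ι : Type*} [Fintype ι] {p : ι → ℝ} (hp : ∀ i, 0 ≤ p i) (α : ℝ) (n : ℕ) :
    fA α (kpow p n) = fA α p ^ n := by
  rw [fA_eq, fA_eq, Fintype.sum_pow]
  exact Finset.sum_congr rfl fun f _ => gA_prod _ (fun j => hp _) α

lemma exists_pos {ι : Type*} [Fintype ι] {p : ι → ℝ} (hp : IsProbVec p) : ∃ i, 0 < p i := by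
  by_contra h
  push Not at h
  have : ∑ i, p i ≤ 0 := Finset.sum_nonpos fun i _ => h i
  linarith [hp.2]

lemma fA_pos {ι : Type*} [Fintype ι] {p : ι → ℝ} (hp : IsProbVec p) (α : ℝ) : 0 < fA α p := by
  obtain ⟨i, hi⟩ := exists_pos hp
  rw [fA_eq]
  refine Finset.sum_pos' (fun i _ => gA_nonneg (hp.1 i) α) ⟨i, Finset.mem_univ _, ?_⟩
  rw [gA_of_pos hi]; positivity

lemma gA_one (x : ℝ) : gA 1 x = x := by
  unfold gA; split_ifs with h
  · exact h.symm
  · simp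

lemma fA_one {ι : Type*} [Fintype ι] {p : ι → ℝ} (hp : IsProbVec p) : fA 1 p = 1 := by
  rw [fA_eq]; simp only [gA_one]; exact hp.2

lemma gA_hasDeriv {x : ℝ} (hx : 0 ≤ x) (α : ℝ) :
    HasDerivAt (fun β => gA β x) (gA α x * Real.log x) α := by
  rcases hx.eq_or_lt with rfl | hx
  · simpa [gA] using hasDerivAt_const α (0 : ℝ)
  · simp only [gA_of_pos hx]
    exact (Real.hasStrictDerivAt_const_rpow hx α).hasDerivAt

lemma gA_cont {x : ℝ} (hx : 0 ≤ x) : Continuous (fun β => gA β x) :=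
  continuous_iff_continuousAt.2 fun α => (gA_hasDeriv hx α).continuousAt

lemma fA_hasDeriv {ι : Type*} [Fintype ι] {p : ι → ℝ} (hp : ∀ i, 0 ≤ p i) (α : ℝ) :
    HasDerivAt (fun β => fA β p) (∑ i, gA α (p i) * Real.log (p i)) α := by
  simp only [fA_eq]
  exact HasDerivAt.fun_sum fun i _ => gA_hasDeriv (hp i) α

lemma fA_cont {ι : Type*} [Fintype ι] {p : ι → ℝ} (hp : ∀ i, 0 ≤ p i) :
    Continuous (fun β => fA β p) :=
  continuous_iff_continuousAt.2 fun α => (fA_hasDeriv hp α).continuousAt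

lemma logfA_hasDeriv {ι : Type*} [Fintype ι] {p : ι → ℝ} (hp : IsProbVec p) (α : ℝ) :
    HasDerivAt (fun β => Real.log (fA β p))
      ((∑ i, gA α (p i) * Real.log (p i)) / fA α p) α :=
  (fA_hasDeriv hp.1 α).log (fA_pos hp α).ne'

lemma Hent_one {ι : Type*} [Fintype ι] (p : ι → ℝ) :
    Hent 1 p = -∑ i, p i * Real.log (p i) := if_pos rfl

lemma Hent_eq {ι : Type*} [Fintype ι] {p : ι → ℝ} (hp : IsProbVec p) (α : ℝ) :
    Hent α p = -dslope (fun β => Real.log (fA β p)) 1 α := by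
  by_cases h : α = 1
  · subst h
    rw [dslope_same, (logfA_hasDeriv hp 1).deriv, Hent_one, fA_one hp]
    simp [gA_one]
  · rw [dslope_of_ne _ h, slope_def_field, fA_one hp, Hent, if_neg h]
    have h1 : (1 - α) ≠ 0 := sub_ne_zero.2 (Ne.symm h)
    have h2 : (α - 1) ≠ 0 := sub_ne_zero.2 h
    change 1 / (1 - α) * Real.log (fA α p) = _
    rw [Real.log_one, sub_zero, ← neg_sub α 1]
    field_simp

lemma Hent_cont {ι : Type*} [Fintype ι] {p : ι → ℝ} (hp : IsProbVec p) :
    Continuous (fun α => Hent α p) := by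
  simp only [Hent_eq hp]
  refine Continuous.neg ?_
  rw [← continuousOn_univ]
  refine (continuousOn_dslope Filter.univ_mem).2 ⟨?_, (logfA_hasDeriv hp 1).differentiableAt⟩
  exact fun α _ => (logfA_hasDeriv hp α).continuousAt.continuousWithinAt

lemma fA_exp {ι : Type*} [Fintype ι] {p : ι → ℝ} (hp : IsProbVec p) (α : ℝ) :
    fA α p = Real.exp ((1 - α) * Hent α p) := by
  by_cases h : α = 1
  · subst h; simp [fA_one hp]
  · rw [Hent, if_neg h]
    have h1 : (1 - α) ≠ 0 := sub_ne_zero.2 (Ne.symm h)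
    change _ = Real.exp ((1 - α) * (1 / (1 - α) * Real.log (fA α p)))
    rw [← mul_assoc, mul_one_div_cancel h1, one_mul, Real.exp_log (fA_pos hp α)]

lemma fA_kpow_exp {ι : Type*} [Fintype ι] {p : ι → ℝ} (hp : IsProbVec p) (α : ℝ) (n : ℕ) :
    fA α (kpow p n) = Real.exp (n * ((1 - α) * Hent α p)) := by
  rw [fA_kpow hp.1, fA_exp hp, ← Real.exp_nat_mul]

/-- Mean of `-log p` under the tilted weights. -/
def aT {ι : Type*} [Fintype ι] (p : ι → ℝ) (α : ℝ) : ℝ :=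
  ∑ i, gA α (p i) / fA α p * -Real.log (p i)

lemma aT_one {ι : Type*} [Fintype ι] {p : ι → ℝ} (hp : IsProbVec p) : aT p 1 = Hent 1 p := by
  rw [Hent_one, aT, fA_one hp]; simp [gA_one]

lemma aT_cont {ι : Type*} [Fintype ι] {p : ι → ℝ} (hp : IsProbVec p) : Continuous (aT p) := by
  unfold aT
  refine continuous_finsetSum _ fun i _ => ?_
  exact ((gA_cont (hp.1 i)).div (fA_cont hp.1) fun α => (fA_pos hp α).ne').mul continuous_const

lemma le_exp_HentInf {m : ℕ} {p : Fin m → ℝ} (hp : IsProbVec p) :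
    (∀ i, p i ≤ Real.exp (-HentInf p)) ∧ ∃ i, p i = Real.exp (-HentInf p) := by
  obtain ⟨i1, hi1⟩ := exists_pos hp
  have hbdd : BddAbove (Set.range p) := (Set.finite_range p).bddAbove
  have hle : ∀ i, p i ≤ ⨆ i, p i := fun i => le_ciSup hbdd i
  have hpos : 0 < ⨆ i, p i := hi1.trans_le (hle i1)
  have e : Real.exp (-HentInf p) = ⨆ i, p i := by
    rw [HentInf, neg_neg, Real.exp_log hpos]
  rw [e]
  refine ⟨hle, ?_⟩
  have : Nonempty (Fin m) := ⟨i1⟩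
  exact exists_eq_ciSup_of_finite

lemma aT_le {m : ℕ} {p : Fin m → ℝ} (hp : IsProbVec p) {A : ℝ} (hA : 0 < A) :
    aT p A ≤ HentInf p + m / A := by
  obtain ⟨hle, i0, hi0⟩ := le_exp_HentInf hp
  set h := HentInf p
  have hF : Real.exp (-(A * h)) ≤ fA A p := by
    have : gA A (p i0) ≤ fA A p :=
      Finset.single_le_sum (f := fun i => gA A (p i)) (fun i _ => gA_nonneg (hp.1 i) A)
        (Finset.mem_univ i0)
    refine le_trans (le_of_eq ?_) this
    rw [hi0, gA_of_pos (Real.exp_pos _), ← Real.exp_mul]; ring_nf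
  have hFp := fA_pos hp A
  have hs : ∑ i, gA A (p i) / fA A p = 1 := by
    rw [← Finset.sum_div, ← fA_eq, div_self hFp.ne']
  have : aT p A - h = ∑ i, gA A (p i) / fA A p * (-Real.log (p i) - h) := by
    simp only [mul_sub, Finset.sum_sub_distrib, ← Finset.sum_mul, hs, aT]; ring
  have hb : ∀ i, gA A (p i) / fA A p * (-Real.log (p i) - h) ≤ 1 / A := by
    intro i
    rcases (hp.1 i).eq_or_lt with hi | hi
    · rw [← hi]; simp [gA]; positivity
    · set u := -Real.log (p i) - h with hu
      have hu0 : 0 ≤ u := by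
        have := Real.log_le_log hi (hle i)
        rw [Real.log_exp] at this; linarith
      have e1 : gA A (p i) = Real.exp (-(A * h)) * Real.exp (-(A * u)) := by
        rw [gA_of_pos hi, Real.rpow_def_of_pos hi, ← Real.exp_add, hu]; ring_nf
      have e2 : gA A (p i) / fA A p ≤ Real.exp (-(A * u)) := by
        rw [div_le_iff₀ hFp, e1, mul_comm]
        exact mul_le_mul_of_nonneg_left hF (Real.exp_pos _).le
      have e3 : A * u ≤ Real.exp (A * u) := by linarith [Real.add_one_le_exp (A * u)]
      calc _ ≤ Real.exp (-(A * u)) * u := mul_le_mul_of_nonneg_right e2 hu0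
        _ ≤ 1 / A := by
          rw [Real.exp_neg, inv_mul_eq_div, div_le_div_iff₀ (Real.exp_pos _) hA]
          linarith
  have h2 : ∑ i, gA A (p i) / fA A p * (-Real.log (p i) - h) ≤ ∑ _i : Fin m, 1 / A :=
    Finset.sum_le_sum fun i _ => hb i
  rw [← this] at h2
  simp only [Finset.sum_const, Finset.card_univ, Fintype.card_fin, nsmul_eq_mul] at h2
  rw [mul_one_div] at h2
  linarith

/-! ### Chernoff upper bounds -/

lemma pos_part_le {x t α : ℝ} (hx : 0 ≤ x) (ht : 0 < t) (hα : 1 ≤ α) :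
    max (x - t) 0 ≤ gA α x * t ^ (1 - α) := by
  have h0 : 0 ≤ gA α x * t ^ (1 - α) := mul_nonneg (gA_nonneg hx α) (by positivity)
  rcases le_or_gt x t with h | h
  · rw [max_eq_right (by linarith)]; exact h0
  · have hx' := ht.trans h
    refine max_le ?_ h0
    rw [gA_of_pos hx']
    calc x - t ≤ x := by linarith
      _ = x ^ α * x ^ (1 - α) := by rw [← Real.rpow_add hx']; simp
      _ ≤ _ := mul_le_mul_of_nonneg_left
          (Real.rpow_le_rpow_of_nonpos ht h.le (by linarith)) (by positivity)

lemma min_le_gA {x t α : ℝ} (hx : 0 ≤ x) (ht : 0 < t) (hα0 : 0 ≤ α) (hα : α ≤ 1) :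
    min x t ≤ gA α x * t ^ (1 - α) := by
  rcases hx.eq_or_lt with rfl | hx
  · simp [gA, ht.le]
  rw [gA_of_pos hx]
  rcases le_total x t with h | h
  · rw [min_eq_left h]
    calc x = x ^ α * x ^ (1 - α) := by rw [← Real.rpow_add hx]; simp
      _ ≤ _ := mul_le_mul_of_nonneg_left
          (Real.rpow_le_rpow hx.le h (by linarith)) (by positivity)
  · rw [min_eq_right h]
    calc t = t ^ α * t ^ (1 - α) := by rw [← Real.rpow_add ht]; simp
      _ ≤ _ := mul_le_mul_of_nonneg_right
          (Real.rpow_le_rpow ht.le h hα0) (by positivity)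

lemma aE_upper {ι : Type*} [Fintype ι] {q : ι → ℝ} (hq : IsProbVec q) {α : ℝ} (hα : 1 ≤ α)
    (n : ℕ) (τ : ℝ) :
    aE (kpow q n) (Real.exp (-(n * τ))) ≤ Real.exp (n * ((α - 1) * (τ - Hent α q))) := by
  calc _ ≤ ∑ f, gA α (kpow q n f) * Real.exp (-(n * τ)) ^ (1 - α) :=
        Finset.sum_le_sum fun f _ => pos_part_le (kpow_nonneg hq.1 n f) (Real.exp_pos _) hα
    _ = _ := by
      rw [← Finset.sum_mul, ← fA_eq, fA_kpow_exp hq, ← Real.exp_mul, ← Real.exp_add]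
      ring_nf

lemma aM_upper {ι : Type*} [Fintype ι] {p : ι → ℝ} (hp : IsProbVec p) {α : ℝ} (hα0 : 0 ≤ α)
    (hα : α ≤ 1) (n : ℕ) (τ : ℝ) :
    aM (kpow p n) (Real.exp (-(n * τ))) ≤ Real.exp (n * ((1 - α) * (Hent α p - τ))) := by
  calc _ ≤ ∑ f, gA α (kpow p n f) * Real.exp (-(n * τ)) ^ (1 - α) :=
        Finset.sum_le_sum fun f _ => min_le_gA (kpow_nonneg hp.1 n f) (Real.exp_pos _) hα0 hα
    _ = _ := by
      rw [← Finset.sum_mul, ← fA_eq, fA_kpow_exp hp, ← Real.exp_mul, ← Real.exp_add]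
      ring_nf

/-! ### Lower bounds by tilting -/

/-- Typical indices of the tilted product weights. -/
def typ {ι : Type*} [Fintype ι] (p : ι → ℝ) (n : ℕ) (μ ε : ℝ) : Finset (Fin n → ι) :=
  Finset.univ.filter fun f => Real.exp (-(n * (μ + ε))) ≤ kpow p n f ∧
    kpow p n f ≤ Real.exp (-(n * (μ - ε)))

lemma typ_mass {ι : Type*} [Fintype ι] {p : ι → ℝ} (hp : IsProbVec p) (M : ℝ)
    (hM : ∀ i, |Real.log (p i)| ≤ M) (α ε : ℝ) (hε : 0 < ε) (n : ℕ) (hn : 0 < n)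
    (hnM : 2 * M ^ 2 ≤ n * ε ^ 2) :
    1 / 2 * Real.exp (n * ((1 - α) * Hent α p)) ≤
      ∑ f ∈ typ p n (aT p α) ε, gA α (kpow p n f) := by
  have hFp := fA_pos hp α
  have hs : ∑ i, gA α (p i) / fA α p = 1 := by
    rw [← Finset.sum_div, ← fA_eq, div_self hFp.ne']
  have hc := aux_cheb (fun i => gA α (p i) / fA α p) (fun i => -Real.log (p i))
    (fun i => div_nonneg (gA_nonneg (hp.1 i) α) hFp.le) hs M (fun i => by rw [abs_neg]; exact hM i)
    n hn ε hε hnM (aT p α) rfl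
  have hprod : ∀ f : Fin n → ι, ∏ j, gA α (p (f j)) / fA α p
      = gA α (kpow p n f) / fA α (kpow p n) := by
    intro f
    rw [Finset.prod_div_distrib, fA_kpow hp.1, kpow, gA_prod _ (fun j => hp.1 _)]
    simp
  simp only [hprod] at hc
  rw [← Finset.sum_div, fA_kpow_exp hp, le_div_iff₀ (Real.exp_pos _)] at hc
  refine hc.trans ?_
  rw [← Finset.sum_filter_ne_zero]
  refine Finset.sum_le_sum_of_subset_of_nonneg ?_
    (fun f _ _ => gA_nonneg (kpow_nonneg hp.1 n f) α)
  intro f hf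
  obtain ⟨hf, hne⟩ := Finset.mem_filter.1 hf
  have hf' := (Finset.mem_filter.1 hf).2
  have hx : kpow p n f ≠ 0 := by
    intro h0; rw [h0] at hne; simp [gA] at hne
  have hpos : 0 < kpow p n f := lt_of_le_of_ne (kpow_nonneg hp.1 n f) hx.symm
  have hlog : Real.log (kpow p n f) = -∑ j, -Real.log (p (f j)) := by
    rw [Finset.sum_neg_distrib, neg_neg, kpow, Real.log_prod]
    intro j _ h0
    exact hx (Finset.prod_eq_zero (Finset.mem_univ j) h0)
  rw [abs_le] at hf'
  refine Finset.mem_filter.2 ⟨Finset.mem_univ _, ?_, ?_⟩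
  · rw [← Real.le_log_iff_exp_le hpos, hlog]; linarith
  · rw [← Real.log_le_iff_le_exp hpos, hlog]; linarith

lemma two_le_exp_one : (2 : ℝ) ≤ Real.exp 1 := by linarith [Real.add_one_le_exp (1 : ℝ)]

lemma aE_lower {ι : Type*} [Fintype ι] {p : ι → ℝ} (hp : IsProbVec p) (M : ℝ)
    (hM : ∀ i, |Real.log (p i)| ≤ M) (α ε : ℝ) (hα : 1 ≤ α) (hε : 0 < ε) (n : ℕ) (hn : 0 < n)
    (hnM : 2 * M ^ 2 ≤ n * ε ^ 2) (hnε : 1 ≤ n * ε) (τ : ℝ) (hτ : τ = aT p α + 2 * ε) :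
    1 / 4 * Real.exp (n * ((α - 1) * (aT p α - ε - Hent α p))) ≤
      aE (kpow p n) (Real.exp (-(n * τ))) := by
  have hm := typ_mass hp M hM α ε hε n hn hnM
  have key : ∀ f ∈ typ p n (aT p α) ε,
      gA α (kpow p n f) * (1 / 2 * Real.exp (n * ((α - 1) * (aT p α - ε)))) ≤
        max (kpow p n f - Real.exp (-(n * τ))) 0 := by
    intro f hf
    obtain ⟨h1, h2⟩ := (Finset.mem_filter.1 hf).2
    have hpos : 0 < kpow p n f := (Real.exp_pos _).trans_le h1
    set x := kpow p n f
    have e1 : 2 * Real.exp (-(n * τ)) ≤ x := by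
      refine le_trans ?_ h1
      have : Real.exp (-(n * (aT p α + ε))) = Real.exp (n * ε) * Real.exp (-(n * τ)) := by
        rw [← Real.exp_add, hτ]; ring_nf
      rw [this]
      refine mul_le_mul_of_nonneg_right ?_ (Real.exp_pos _).le
      exact two_le_exp_one.trans (Real.exp_le_exp.2 hnε)
    have e2 : x ^ α * Real.exp (n * ((α - 1) * (aT p α - ε))) ≤ x := by
      calc _ = x ^ α * Real.exp (-(n * (aT p α - ε))) ^ (1 - α) := by
            rw [← Real.exp_mul]; ring_nf
        _ ≤ x ^ α * x ^ (1 - α) := mul_le_mul_of_nonneg_left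
            (Real.rpow_le_rpow_of_nonpos hpos h2 (by linarith)) (by positivity)
        _ = x := by rw [← Real.rpow_add hpos]; simp
    rw [gA_of_pos hpos]
    refine le_trans ?_ (le_max_left _ _)
    linarith
  have h3 : ∑ f ∈ typ p n (aT p α) ε,
      gA α (kpow p n f) * (1 / 2 * Real.exp (n * ((α - 1) * (aT p α - ε)))) ≤
        aE (kpow p n) (Real.exp (-(n * τ))) :=
    (Finset.sum_le_sum key).trans (Finset.sum_le_sum_of_subset_of_nonneg
      (Finset.subset_univ _) fun _ _ _ => le_max_right _ _)
  rw [← Finset.sum_mul] at h3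
  refine le_trans ?_ h3
  refine le_trans (le_of_eq ?_) (mul_le_mul_of_nonneg_right hm (by positivity))
  have : Real.exp (n * ((α - 1) * (aT p α - ε - Hent α p))) =
      Real.exp (n * ((1 - α) * Hent α p)) * Real.exp (n * ((α - 1) * (aT p α - ε))) := by
    rw [← Real.exp_add]; ring_nf
  rw [this]; ring

lemma aM_lower {ι : Type*} [Fintype ι] {q : ι → ℝ} (hq : IsProbVec q) (M : ℝ)
    (hM : ∀ i, |Real.log (q i)| ≤ M) (α ε : ℝ) (hα : α ≤ 1) (hε : 0 < ε) (n : ℕ)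
    (hn : 0 < n) (hnM : 2 * M ^ 2 ≤ n * ε ^ 2) (τ : ℝ)
    (hτ : τ = aT q α - ε ∨ α = 0 ∧ aT q α - ε ≤ τ) :
    1 / 2 * Real.exp (n * ((1 - α) * (Hent α q - τ - 2 * ε))) ≤
      aM (kpow q n) (Real.exp (-(n * τ))) := by
  have hn' : (0 : ℝ) < n := by exact_mod_cast hn
  have hm := typ_mass hq M hM α ε hε n hn hnM
  have key : ∀ f ∈ typ q n (aT q α) ε,
      gA α (kpow q n f) * Real.exp (n * ((1 - α) * (-τ - 2 * ε))) ≤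
        min (kpow q n f) (Real.exp (-(n * τ))) := by
    intro f hf
    obtain ⟨h1, h2⟩ := (Finset.mem_filter.1 hf).2
    have hpos : 0 < kpow q n f := (Real.exp_pos _).trans_le h1
    set x := kpow q n f
    rw [gA_of_pos hpos]
    rcases hτ with hτ | ⟨h0, hτ⟩
    · rw [← hτ] at h2
      rw [min_eq_left h2]
      calc _ = x ^ α * Real.exp (-(n * (aT q α + ε))) ^ (1 - α) := by
            rw [← Real.exp_mul, hτ]; ring_nf
        _ ≤ x ^ α * x ^ (1 - α) := mul_le_mul_of_nonneg_left
            (Real.rpow_le_rpow (Real.exp_pos _).le h1 (by linarith)) (by positivity)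
        _ = x := by rw [← Real.rpow_add hpos]; simp
    · rw [h0] at h1 hτ ⊢
      rw [Real.rpow_zero, one_mul]
      refine le_min (le_trans (Real.exp_le_exp.2 ?_) h1) (Real.exp_le_exp.2 ?_)
      · nlinarith
      · nlinarith
  have h3 : ∑ f ∈ typ q n (aT q α) ε,
      gA α (kpow q n f) * Real.exp (n * ((1 - α) * (-τ - 2 * ε))) ≤
        aM (kpow q n) (Real.exp (-(n * τ))) :=
    (Finset.sum_le_sum key).trans (Finset.sum_le_sum_of_subset_of_nonneg
      (Finset.subset_univ _) fun f _ _ => le_min (kpow_nonneg hq.1 n f) (Real.exp_pos _).le)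
  rw [← Finset.sum_mul] at h3
  refine le_trans ?_ h3
  refine le_trans (le_of_eq ?_) (mul_le_mul_of_nonneg_right hm (by positivity))
  rw [mul_assoc, ← Real.exp_add]; ring_nf

/-! ### The direct implication -/

lemma exists_nat_mul {c : ℝ} (hc : 0 < c) (B : ℝ) : ∃ N : ℕ, ∀ n : ℕ, N ≤ n → B ≤ n * c := by
  obtain ⟨N, hN⟩ := exists_nat_gt (B / c)
  refine ⟨N, fun n hn => ?_⟩
  have h1 : (N : ℝ) ≤ n := by exact_mod_cast hn
  have h2 := (div_lt_iff₀ hc).1 hN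
  nlinarith

lemma four_le_exp_two : (4 : ℝ) ≤ Real.exp 2 := by
  have h : Real.exp 2 = Real.exp 1 * Real.exp 1 := by rw [← Real.exp_add]; norm_num
  rw [h]; nlinarith [two_le_exp_one]

lemma exp_cmp {x y : ℝ} (h : x + 2 ≤ y) : Real.exp x ≤ 1 / 4 * Real.exp y := by
  have h1 : Real.exp x * Real.exp 2 ≤ Real.exp y := by
    rw [← Real.exp_add]; exact Real.exp_le_exp.2 h
  nlinarith [four_le_exp_two, Real.exp_pos x]

lemma exp_cmp_mul {n x y c : ℝ} (hn : 0 ≤ n) (h : c ≤ y - x) (h2 : 2 ≤ n * c) :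
    Real.exp (n * x) ≤ 1 / 4 * Real.exp (n * y) := by
  refine exp_cmp ?_
  have := mul_le_mul_of_nonneg_left h hn
  rw [mul_sub] at this
  linarith

lemma direct {m m' : ℕ} (p : Fin m → ℝ) (q : Fin m' → ℝ)
    (hp : IsProbVec p) (hq : IsProbVec q)
    (hH : ∀ α : ℝ, 0 ≤ α → Hent α p < Hent α q) (hI : HentInf p < HentInf q) :
    ∃ N : ℕ, ∀ n : ℕ, N ≤ n → Majorizes (kpow p n) (kpow q n) := by
  -- constants
  obtain ⟨d, hd⟩ : ∃ d, d = HentInf q - HentInf p := ⟨_, rfl⟩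
  have hd0 : 0 < d := by linarith
  obtain ⟨A, hA1, hA⟩ : ∃ A : ℝ, 1 ≤ A ∧ (m : ℝ) / A ≤ d / 2 := by
    refine ⟨1 + 2 * m / d, ?_, ?_⟩
    · have : 0 ≤ 2 * (m : ℝ) / d := by positivity
      linarith
    · have : 0 ≤ 2 * (m : ℝ) / d := by positivity
      rw [div_le_iff₀ (by linarith)]
      have : d / 2 * (1 + 2 * m / d) = d / 2 + m := by field_simp
      linarith
  have hcontd : Continuous fun α => Hent α q - Hent α p := (Hent_cont hq).sub (Hent_cont hp)
  obtain ⟨g, hg0, hg⟩ : ∃ g : ℝ, 0 < g ∧ ∀ α, 0 ≤ α → α ≤ A → g ≤ Hent α q - Hent α p := by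
    obtain ⟨α0, hα0, hmin⟩ := (isCompact_Icc (a := (0 : ℝ)) (b := A)).exists_isMinOn
      ⟨0, by constructor <;> linarith⟩ hcontd.continuousOn
    exact ⟨_, sub_pos.2 (hH α0 hα0.1), fun α h1 h2 => hmin ⟨h1, h2⟩⟩
  have hg1 := hg 1 zero_le_one hA1
  obtain ⟨ε, hε, hεd, hεg⟩ : ∃ ε : ℝ, 0 < ε ∧ 4 * ε ≤ d ∧ 8 * ε ≤ g :=
    ⟨min (d / 4) (g / 8), by positivity, by linarith [min_le_left (d / 4) (g / 8)],
      by linarith [min_le_right (d / 4) (g / 8)]⟩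
  obtain ⟨α1, hα1, hα1'⟩ : ∃ α1 : ℝ, 1 < α1 ∧ Hent 1 q - ε / 2 < Hent α1 q := by
    have h1 : ∀ᶠ α in nhds (1 : ℝ), Hent 1 q - ε / 2 < Hent α q :=
      (Hent_cont hq).continuousAt.eventually_const_lt (by linarith)
    obtain ⟨r, hr, hb⟩ := Metric.eventually_nhds_iff.1 h1
    refine ⟨1 + r / 2, by linarith, hb ?_⟩
    rw [Real.dist_eq, abs_of_nonneg] <;> linarith
  obtain ⟨α2, hα2, hα20, hα2'⟩ : ∃ α2 : ℝ, α2 < 1 ∧ 0 ≤ α2 ∧ Hent α2 p < Hent 1 p + ε / 2 := by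
    have h1 : ∀ᶠ α in nhds (1 : ℝ), Hent α p < Hent 1 p + ε / 2 :=
      (Hent_cont hp).continuousAt.eventually_lt_const (by linarith)
    obtain ⟨r, hr, hb⟩ := Metric.eventually_nhds_iff.1 h1
    have hm0 : 0 < min r 1 := by positivity
    have hm1 := min_le_left r 1
    have hm2 := min_le_right r 1
    refine ⟨1 - min r 1 / 2, by linarith, by linarith, hb ?_⟩
    rw [Real.dist_eq, abs_sub_comm, abs_of_nonneg] <;> linarith
  obtain ⟨c0, hc0⟩ : ∃ c, c = (α1 - 1) * (ε / 2) := ⟨_, rfl⟩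
  obtain ⟨c1, hc1⟩ : ∃ c, c = (1 - α2) * (ε / 2) := ⟨_, rfl⟩
  have hc0p : 0 < c0 := by rw [hc0]; exact mul_pos (by linarith) (by linarith)
  have hc1p : 0 < c1 := by rw [hc1]; exact mul_pos (by linarith) (by linarith)
  have hTp := aT_cont hp
  have hTq := aT_cont hq
  have hHp := Hent_cont hp
  have hHq := Hent_cont hq
  obtain ⟨κ, hκ, hκ1, hnear⟩ : ∃ κ : ℝ, 0 < κ ∧ κ ≤ 1 ∧ ∀ α, |α - 1| < κ →
      aT p α < Hent 1 p + ε ∧ Hent 1 q - ε < aT q α ∧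
      -(c0 / 2) < (α - 1) * (aT p α - ε - Hent α p) ∧
      -(c1 / 2) < (1 - α) * (Hent α q - aT q α - ε) := by
    have h1 : ∀ᶠ α in nhds (1 : ℝ), aT p α < Hent 1 p + ε :=
      hTp.continuousAt.eventually_lt_const (by rw [aT_one hp]; linarith)
    have h2 : ∀ᶠ α in nhds (1 : ℝ), Hent 1 q - ε < aT q α :=
      hTq.continuousAt.eventually_const_lt (by rw [aT_one hq]; linarith)
    have h3 : ∀ᶠ α in nhds (1 : ℝ), -(c0 / 2) < (α - 1) * (aT p α - ε - Hent α p) := by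
      have : Continuous fun α => (α - 1) * (aT p α - ε - Hent α p) := by fun_prop
      refine this.continuousAt.eventually_const_lt ?_
      simp only [sub_self, zero_mul]; linarith
    have h4 : ∀ᶠ α in nhds (1 : ℝ), -(c1 / 2) < (1 - α) * (Hent α q - aT q α - ε) := by
      have : Continuous fun α => (1 - α) * (Hent α q - aT q α - ε) := by fun_prop
      refine this.continuousAt.eventually_const_lt ?_
      simp only [sub_self, zero_mul]; linarith
    obtain ⟨r, hr, hb⟩ := Metric.eventually_nhds_iff.1 (h1.and (h2.and (h3.and h4)))
    refine ⟨min r 1, by positivity, min_le_right _ _, fun α hα => hb ?_⟩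
    rw [Real.dist_eq]; exact hα.trans_le (min_le_left _ _)
  obtain ⟨Mp, hMp⟩ : ∃ M : ℝ, ∀ i, |Real.log (p i)| ≤ M :=
    ⟨∑ i, |Real.log (p i)|, fun i => Finset.single_le_sum (f := fun i => |Real.log (p i)|)
      (fun i _ => abs_nonneg _) (Finset.mem_univ i)⟩
  obtain ⟨Mq, hMq⟩ : ∃ M : ℝ, ∀ i, |Real.log (q i)| ≤ M :=
    ⟨∑ i, |Real.log (q i)|, fun i => Finset.single_le_sum (f := fun i => |Real.log (q i)|)
      (fun i _ => abs_nonneg _) (Finset.mem_univ i)⟩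
  obtain ⟨N1, hN1⟩ := exists_nat_mul (c := ε ^ 2) (by positivity) (2 * Mp ^ 2)
  obtain ⟨N2, hN2⟩ := exists_nat_mul (c := ε ^ 2) (by positivity) (2 * Mq ^ 2)
  obtain ⟨N3, hN3⟩ := exists_nat_mul hε 1
  obtain ⟨N4, hN4⟩ := exists_nat_mul hc0p 4
  obtain ⟨N5, hN5⟩ := exists_nat_mul hc1p 4
  obtain ⟨N6, hN6⟩ := exists_nat_mul (mul_pos hκ hg0) 4
  refine ⟨1 + N1 + N2 + N3 + N4 + N5 + N6, fun n hn => ?_⟩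
  have hn0 : 0 < n := by omega
  have hnR : (0 : ℝ) < n := by exact_mod_cast hn0
  replace hN1 := hN1 n (by omega)
  replace hN2 := hN2 n (by omega)
  replace hN3 := hN3 n (by omega)
  replace hN4 := hN4 n (by omega)
  replace hN5 := hN5 n (by omega)
  replace hN6 := hN6 n (by omega)
  refine majorizes_of_aE _ _ (kpow_nonneg hp.1 n) (kpow_nonneg hq.1 n)
    (by rw [kpow_sum hp, kpow_sum hq]) fun t ht => ?_
  obtain ⟨τ, rfl⟩ : ∃ τ, t = Real.exp (-(n * τ)) := by
    refine ⟨-Real.log t / n, ?_⟩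
    rw [mul_div_cancel₀ _ hnR.ne', neg_neg, Real.exp_log ht]
  -- exponentially small quantities
  have hEq : τ ≤ Hent 1 q - ε →
      aE (kpow q n) (Real.exp (-(n * τ))) ≤ Real.exp (n * -c0) := by
    intro h
    refine (aE_upper hq hα1.le n τ).trans (Real.exp_le_exp.2 ?_)
    refine mul_le_mul_of_nonneg_left ?_ hnR.le
    have : (α1 - 1) * (τ - Hent α1 q) ≤ (α1 - 1) * (-(ε / 2)) :=
      mul_le_mul_of_nonneg_left (by linarith) (by linarith)
    rw [hc0]; linarith
  have hMpU : Hent 1 p + ε ≤ τ →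
      aM (kpow p n) (Real.exp (-(n * τ))) ≤ Real.exp (n * -c1) := by
    intro h
    refine (aM_upper hp hα20 hα2.le n τ).trans (Real.exp_le_exp.2 ?_)
    refine mul_le_mul_of_nonneg_left ?_ hnR.le
    have : (1 - α2) * (Hent α2 p - τ) ≤ (1 - α2) * (-(ε / 2)) :=
      mul_le_mul_of_nonneg_left (by linarith) (by linarith)
    rw [hc1]; linarith
  rcases lt_or_ge τ (HentInf q) with hτ0 | hτ0
  · -- everything of `q` is below the threshold
    have h0 : aE (kpow q n) (Real.exp (-(n * τ))) = 0 := by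
      refine Finset.sum_eq_zero fun f _ => max_eq_right ?_
      have h1 : kpow q n f ≤ Real.exp (-HentInf q) ^ n := by
        refine (Finset.prod_le_prod (fun j _ => hq.1 _)
          (fun j _ => (le_exp_HentInf hq).1 (f j))).trans (le_of_eq ?_)
        simp
      rw [← Real.exp_nat_mul] at h1
      have h2 : Real.exp (n * -HentInf q) ≤ Real.exp (-(n * τ)) :=
        Real.exp_le_exp.2 (by nlinarith)
      linarith
    rw [h0]
    exact Finset.sum_nonneg fun f _ => le_max_right _ _
  rcases le_total τ (Hent 1 p + 2 * ε) with hτ1 | hτ1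
  · -- large exponents
    have hA' := aT_le hp (A := A) (by linarith)
    obtain ⟨α, ⟨hα, hαA⟩, hαT⟩ := intermediate_value_Icc' hA1 hTp.continuousOn
      (show τ - 2 * ε ∈ Set.Icc (aT p A) (aT p 1) from
        ⟨by linarith, by rw [aT_one hp]; linarith⟩)
    have hlow := aE_lower hp Mp hMp α ε hα hε n hn0 hN1 hN3 τ (by linarith)
    refine le_trans ?_ hlow
    rcases lt_or_ge |α - 1| κ with hk | hk
    · obtain ⟨k1, -, k3, -⟩ := hnear α hk
      exact (hEq (by linarith)).trans
        (exp_cmp_mul (c := c0 / 2) hnR.le (by linarith) (by linarith))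
    · rw [abs_of_nonneg (by linarith)] at hk
      refine (aE_upper hq hα n τ).trans
        (exp_cmp_mul (c := κ * (g / 2)) hnR.le ?_ (by linarith))
      have hgα := hg α (by linarith) hαA
      have e1 : κ * (g / 2) ≤ (α - 1) * (aT p α - ε - Hent α p - (τ - Hent α q)) :=
        mul_le_mul hk (by linarith) (by linarith) (by linarith)
      linarith
  rcases le_total τ (Hent 1 q - ε) with hτ2 | hτ2
  · -- the middle range
    have hlow := aE_lower hp Mp hMp 1 ε le_rfl hε n hn0 hN1 hN3 _ rfl
    refine (hEq hτ2).trans (le_trans ?_ (hlow.trans (aE_anti _ (Real.exp_le_exp.2 ?_))))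
    · refine exp_cmp_mul (c := c0) hnR.le ?_ (by linarith)
      rw [sub_self, zero_mul]; linarith
    · rw [aT_one hp]
      have := mul_le_mul_of_nonneg_left hτ1 hnR.le
      linarith
  · -- small exponents
    rw [aE_eq, aE_eq, kpow_sum hp, kpow_sum hq]
    refine sub_le_sub_left ?_ 1
    obtain ⟨α, hα0, hα1, hαT⟩ : ∃ α : ℝ, 0 ≤ α ∧ α ≤ 1 ∧
        (τ = aT q α - ε ∨ α = 0 ∧ aT q α - ε ≤ τ) := by
      rcases le_total τ (aT q 0 - ε) with h | h
      · obtain ⟨α, ⟨h1, h2⟩, h3⟩ := intermediate_value_Icc' (zero_le_one (α := ℝ))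
          hTq.continuousOn (show τ + ε ∈ Set.Icc (aT q 1) (aT q 0) from
            ⟨by rw [aT_one hq]; linarith, by linarith⟩)
        exact ⟨α, h1, h2, Or.inl (by linarith)⟩
      · exact ⟨0, le_rfl, zero_le_one, Or.inr ⟨rfl, h⟩⟩
    have hlow := aM_lower hq Mq hMq α ε hα1 hε n hn0 hN2 τ hαT
    refine le_trans (le_trans ?_ (mul_le_mul_of_nonneg_right
      (show (1 / 4 : ℝ) ≤ 1 / 2 by norm_num) (Real.exp_pos _).le)) hlow
    rcases lt_or_ge |α - 1| κ with hk | hk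
    · obtain ⟨-, k2, -, k4⟩ := hnear α hk
      rcases hαT with hαT | ⟨rfl, -⟩
      · refine (hMpU (by linarith)).trans
          (exp_cmp_mul (c := c1 / 2) hnR.le ?_ (by linarith))
        have : Hent α q - τ - 2 * ε = Hent α q - aT q α - ε := by rw [hαT]; ring
        rw [this]
        linarith
      · norm_num at hk; linarith
    · rw [abs_sub_comm, abs_of_nonneg (by linarith)] at hk
      refine (aM_upper hp hα0 hα1 n τ).trans
        (exp_cmp_mul (c := κ * (g / 2)) hnR.le ?_ (by linarith))
      have hgα := hg α hα0 (by linarith)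
      have e1 : κ * (g / 2) ≤ (1 - α) * (Hent α q - τ - 2 * ε - (Hent α p - τ)) :=
        mul_le_mul hk (by linarith) (by linarith) (by linarith)
      linarith

/-! ### The converse implication -/

lemma int_pos_part {α x : ℝ} (hα : 1 < α) (hx0 : 0 ≤ x) (hx1 : x ≤ 1) :
    IntervalIntegrable (fun t => t ^ (α - 2) * max (x - t) 0) MeasureTheory.volume 0 1 ∧
    ∫ t in (0 : ℝ)..1, t ^ (α - 2) * max (x - t) 0 = x ^ α / (α * (α - 1)) := by
  have hi : ∀ a b : ℝ, IntervalIntegrable (fun t : ℝ => t ^ (α - 2)) MeasureTheory.volume a b :=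
    fun a b => intervalIntegral.intervalIntegrable_rpow' (by linarith)
  have hii : ∀ a b : ℝ, IntervalIntegrable (fun t => t ^ (α - 2) * max (x - t) 0)
      MeasureTheory.volume a b := fun a b =>
    (hi a b).mul_continuousOn (by fun_prop)
  refine ⟨hii 0 1, ?_⟩
  rw [← intervalIntegral.integral_add_adjacent_intervals (hii 0 x) (hii x 1)]
  have e2 : ∫ t in x..1, t ^ (α - 2) * max (x - t) 0 = 0 := by
    rw [intervalIntegral.integral_congr (g := fun _ => (0 : ℝ))]
    · simp
    · intro t ht
      rw [Set.uIcc_of_le hx1] at ht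
      simp only
      rw [max_eq_right (by linarith [ht.1]), mul_zero]
  have e1 : ∫ t in (0 : ℝ)..x, t ^ (α - 2) * max (x - t) 0
      = ∫ t in (0 : ℝ)..x, (x * t ^ (α - 2) - t ^ (α - 1)) := by
    refine intervalIntegral.integral_congr_ae ?_
    refine Filter.Eventually.of_forall fun t ht => ?_
    rw [Set.uIoc_of_le hx0] at ht
    rw [max_eq_left (by linarith [ht.2])]
    have : t ^ (α - 1) = t ^ (α - 2) * t := by
      rw [← Real.rpow_add_one ht.1.ne']; ring_nf
    rw [this]; ring
  rw [e2, e1, intervalIntegral.integral_sub ((hi 0 x).const_mul x)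
    (intervalIntegral.intervalIntegrable_rpow' (by linarith)),
    intervalIntegral.integral_const_mul, integral_rpow (Or.inl (by linarith)),
    integral_rpow (Or.inl (by linarith))]
  have h1 : α - 1 ≠ 0 := by linarith
  have h2 : α ≠ 0 := by linarith
  have e3 : α - 2 + 1 = α - 1 := by ring
  have e4 : α - 1 + 1 = α := by ring
  rw [e3, e4, Real.zero_rpow h1, Real.zero_rpow h2]
  rcases hx0.eq_or_lt with rfl | hx
  · simp [Real.zero_rpow h2]
  · have : x ^ α = x * x ^ (α - 1) := by
      rw [mul_comm, ← Real.rpow_add_one hx.ne']; ring_nf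
    rw [this]; field_simp; ring

lemma int_min {α x : ℝ} (hα0 : 0 < α) (hα : α < 1) (hx0 : 0 ≤ x) (hx1 : x ≤ 1) :
    IntervalIntegrable (fun t => t ^ (α - 2) * min x t) MeasureTheory.volume 0 1 ∧
    ∫ t in (0 : ℝ)..1, t ^ (α - 2) * min x t =
      (gA α x - α * x) / (α * (1 - α)) := by
  rcases hx0.eq_or_lt with rfl | hx
  · have : ∀ t ∈ Set.uIoc (0 : ℝ) 1, t ^ (α - 2) * min 0 t = 0 := by
      intro t ht
      rw [Set.uIoc_of_le zero_le_one] at ht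
      rw [min_eq_left ht.1.le, mul_zero]
    constructor
    · refine (IntervalIntegrable.congr (f := fun _ => (0 : ℝ)) ?_ (by simp))
      exact fun t ht => (this t ht).symm
    · rw [intervalIntegral.integral_congr_ae (g := fun _ => (0 : ℝ))
        (Filter.Eventually.of_forall this)]
      simp [gA]
  have c1 : ∀ t ∈ Set.uIoc (0 : ℝ) x, t ^ (α - 2) * min x t = t ^ (α - 1) := by
    intro t ht
    rw [Set.uIoc_of_le hx0] at ht
    rw [min_eq_right ht.2, ← Real.rpow_add_one ht.1.ne']; ring_nf
  have c2 : ∀ t ∈ Set.uIoc x 1, t ^ (α - 2) * min x t = t ^ (α - 2) * x := by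
    intro t ht
    rw [Set.uIoc_of_le hx1] at ht
    rw [min_eq_left ht.1.le]
  have hmem : (0 : ℝ) ∉ Set.uIcc x 1 := by
    rw [Set.uIcc_of_le hx1]; intro h; linarith [h.1]
  have i1 : IntervalIntegrable (fun t => t ^ (α - 2) * min x t) MeasureTheory.volume 0 x := by
    refine IntervalIntegrable.congr (f := fun t : ℝ => t ^ (α - 1))
      (fun t ht => (c1 t ht).symm) ?_
    exact intervalIntegral.intervalIntegrable_rpow' (by linarith)
  have i2 : IntervalIntegrable (fun t => t ^ (α - 2) * min x t) MeasureTheory.volume x 1 := by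
    refine IntervalIntegrable.congr (f := fun t : ℝ => t ^ (α - 2) * x)
      (fun t ht => (c2 t ht).symm) ?_
    exact (intervalIntegral.intervalIntegrable_rpow (Or.inr hmem)).mul_const x
  refine ⟨i1.trans i2, ?_⟩
  rw [← intervalIntegral.integral_add_adjacent_intervals i1 i2,
    intervalIntegral.integral_congr_ae (Filter.Eventually.of_forall c1),
    intervalIntegral.integral_congr_ae (Filter.Eventually.of_forall c2),
    intervalIntegral.integral_mul_const, integral_rpow (Or.inl (by linarith)),
    integral_rpow (Or.inr ⟨by linarith, hmem⟩), gA_of_pos hx]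
  have h1 : α - 1 ≠ 0 := by linarith
  have h1' : 1 - α ≠ 0 := by linarith
  have h2 : α ≠ 0 := by linarith
  have e3 : α - 2 + 1 = α - 1 := by ring
  have e4 : α - 1 + 1 = α := by ring
  rw [e3, e4, Real.zero_rpow h2, Real.one_rpow]
  have : x ^ α = x * x ^ (α - 1) := by
    rw [mul_comm, ← Real.rpow_add_one hx.ne']; ring_nf
  rw [this, ← neg_sub 1 α]; field_simp; ring

lemma int_aE {ι : Type*} [Fintype ι] {p : ι → ℝ} (hp : ∀ i, 0 ≤ p i) (hp1 : ∀ i, p i ≤ 1)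
    {α : ℝ} (hα : 1 < α) :
    IntervalIntegrable (fun t => t ^ (α - 2) * aE p t) MeasureTheory.volume 0 1 ∧
    ∫ t in (0 : ℝ)..1, t ^ (α - 2) * aE p t = fA α p / (α * (α - 1)) := by
  simp only [aE, Finset.mul_sum]
  constructor
  · have e : (fun t : ℝ => ∑ i, t ^ (α - 2) * max (p i - t) 0) =
        ∑ i, fun t : ℝ => t ^ (α - 2) * max (p i - t) 0 := by
      funext t; simp
    rw [e]
    exact IntervalIntegrable.sum Finset.univ
      (fun i _ => (int_pos_part hα (hp i) (hp1 i)).1)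
  · rw [intervalIntegral.integral_finsetSum
      (fun i _ => (int_pos_part hα (hp i) (hp1 i)).1), fA_eq, Finset.sum_div]
    refine Finset.sum_congr rfl fun i _ => ?_
    rw [(int_pos_part hα (hp i) (hp1 i)).2]
    congr 1
    unfold gA; split_ifs with h0
    · rw [h0, Real.zero_rpow (by linarith)]
    · rfl

lemma int_aM {ι : Type*} [Fintype ι] {p : ι → ℝ} (hp : ∀ i, 0 ≤ p i) (hp1 : ∀ i, p i ≤ 1)
    {α : ℝ} (hα0 : 0 < α) (hα : α < 1) :
    IntervalIntegrable (fun t => t ^ (α - 2) * aM p t) MeasureTheory.volume 0 1 ∧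
    ∫ t in (0 : ℝ)..1, t ^ (α - 2) * aM p t =
      (fA α p - α * ∑ i, p i) / (α * (1 - α)) := by
  simp only [aM, Finset.mul_sum]
  constructor
  · have e : (fun t : ℝ => ∑ i, t ^ (α - 2) * min (p i) t) =
        ∑ i, fun t : ℝ => t ^ (α - 2) * min (p i) t := by
      funext t; simp
    rw [e]
    exact IntervalIntegrable.sum Finset.univ
      (fun i _ => (int_min hα0 hα (hp i) (hp1 i)).1)
  · rw [intervalIntegral.integral_finsetSum
      (fun i _ => (int_min hα0 hα (hp i) (hp1 i)).1), fA_eq, ← Finset.sum_sub_distrib,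
      Finset.sum_div]
    exact Finset.sum_congr rfl fun i _ => (int_min hα0 hα (hp i) (hp1 i)).2

lemma IsProbVec.le_one {ι : Type*} [Fintype ι] {p : ι → ℝ} (hp : IsProbVec p) (i : ι) :
    p i ≤ 1 := by
  rw [← hp.2]
  exact Finset.single_le_sum (fun i _ => hp.1 i) (Finset.mem_univ i)

lemma fA_mono_of_gt {ι κ : Type*} [Fintype ι] [Fintype κ] {p : ι → ℝ} {q : κ → ℝ}
    (hp : IsProbVec p) (hq : IsProbVec q)
    (h : ∀ t, 0 ≤ t → aE q t ≤ aE p t) {α : ℝ} (hα : 1 < α) : fA α q ≤ fA α p := by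
  obtain ⟨ip, ep⟩ := int_aE hp.1 hp.le_one hα
  obtain ⟨iq, eq⟩ := int_aE hq.1 hq.le_one hα
  have hc : 0 < α * (α - 1) := mul_pos (by linarith) (by linarith)
  have := intervalIntegral.integral_mono_on zero_le_one iq ip fun t ht =>
    mul_le_mul_of_nonneg_left (h t ht.1) (Real.rpow_nonneg ht.1 (α - 2))
  rw [ep, eq] at this
  exact (div_le_div_iff_of_pos_right hc).1 this

lemma fA_mono_of_lt {ι κ : Type*} [Fintype ι] [Fintype κ] {p : ι → ℝ} {q : κ → ℝ}
    (hp : IsProbVec p) (hq : IsProbVec q)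
    (h : ∀ t, 0 ≤ t → aE q t ≤ aE p t) {α : ℝ} (hα0 : 0 < α) (hα : α < 1) :
    fA α p ≤ fA α q := by
  obtain ⟨ip, ep⟩ := int_aM hp.1 hp.le_one hα0 hα
  obtain ⟨iq, eq⟩ := int_aM hq.1 hq.le_one hα0 hα
  have hc : 0 < α * (1 - α) := mul_pos (by linarith) (by linarith)
  have hM : ∀ t, 0 ≤ t → aM p t ≤ aM q t := by
    intro t ht
    have := h t ht
    rw [aE_eq, aE_eq, hp.2, hq.2] at this
    linarith
  have := intervalIntegral.integral_mono_on zero_le_one ip iq fun t ht =>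
    mul_le_mul_of_nonneg_left (hM t ht.1) (Real.rpow_nonneg ht.1 (α - 2))
  rw [ep, eq, hp.2, hq.2] at this
  have := (div_le_div_iff_of_pos_right hc).1 this
  linarith

lemma kpow_prob {ι : Type*} [Fintype ι] {p : ι → ℝ} (hp : IsProbVec p) (n : ℕ) :
    IsProbVec (kpow p n) := ⟨kpow_nonneg hp.1 n, kpow_sum hp n⟩

lemma converse {m m' : ℕ} (p : Fin m → ℝ) (q : Fin m' → ℝ)
    (hp : IsProbVec p) (hq : IsProbVec q) (n : ℕ) (hn : 1 ≤ n)
    (hmaj : Majorizes (kpow p n) (kpow q n)) :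
    (∀ α : ℝ, 0 ≤ α → Hent α p ≤ Hent α q) ∧ HentInf p ≤ HentInf q := by
  have hE := aE_of_majorizes _ _ hmaj
  have hn0 : n ≠ 0 := by omega
  have hnR : (0 : ℝ) < n := by exact_mod_cast hn
  have hne : ∀ α : ℝ, 0 < α → α ≠ 1 → Hent α p ≤ Hent α q := by
    intro α hα hα1
    rcases lt_or_gt_of_ne hα1 with h | h
    · have := fA_mono_of_lt (kpow_prob hp n) (kpow_prob hq n) hE hα h
      rw [fA_kpow_exp hp, fA_kpow_exp hq, Real.exp_le_exp] at this
      exact le_of_mul_le_mul_left (le_of_mul_le_mul_left this hnR) (by linarith)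
    · have := fA_mono_of_gt (kpow_prob hp n) (kpow_prob hq n) hE h
      rw [fA_kpow_exp hp, fA_kpow_exp hq, Real.exp_le_exp] at this
      have := le_of_mul_le_mul_left this hnR
      exact le_of_mul_le_mul_left (a := α - 1) (by linarith) (by linarith)
  refine ⟨fun α hα => ?_, ?_⟩
  · -- `α` is a limit from the right of exponents covered above
    have hf : ∀ᶠ β in nhdsWithin α (Set.Ioi α), Hent β p ≤ Hent β q := by
      rcases lt_or_ge α 1 with h | h
      · filter_upwards [Ioo_mem_nhdsGT h] with β hβ
        exact hne β (by linarith [hβ.1]) hβ.2.ne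
      · filter_upwards [self_mem_nhdsWithin] with β hβ
        have hβ' : α < β := hβ
        exact hne β (by linarith) (by linarith)
    exact le_of_tendsto_of_tendsto ((Hent_cont hp).continuousWithinAt (s := Set.Ioi α) (x := α))
      ((Hent_cont hq).continuousWithinAt (s := Set.Ioi α) (x := α)) hf
  · obtain ⟨hle, -⟩ := le_exp_HentInf hp
    obtain ⟨-, j, hj⟩ := le_exp_HentInf hq
    have h1 := hE (Real.exp (-HentInf p) ^ n) (by positivity)
    have h2 : aE (kpow p n) (Real.exp (-HentInf p) ^ n) = 0 := by
      refine Finset.sum_eq_zero fun f _ => max_eq_right ?_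
      have : kpow p n f ≤ Real.exp (-HentInf p) ^ n := by
        refine (Finset.prod_le_prod (fun j _ => hp.1 _) (fun j _ => hle (f j))).trans
          (le_of_eq ?_)
        simp
      linarith
    have h3 : kpow q n (fun _ => j) - Real.exp (-HentInf p) ^ n ≤
        aE (kpow q n) (Real.exp (-HentInf p) ^ n) :=
      (le_max_left _ 0).trans (Finset.single_le_sum
        (f := fun f => max (kpow q n f - Real.exp (-HentInf p) ^ n) 0)
        (fun f _ => le_max_right _ _) (Finset.mem_univ (fun _ => j)))
    have h4 : kpow q n (fun _ => j) = Real.exp (-HentInf q) ^ n := by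
      simp [kpow, hj]
    have h5 : Real.exp (-HentInf q) ^ n ≤ Real.exp (-HentInf p) ^ n := by linarith
    have h6 := (pow_le_pow_iff_left₀ (Real.exp_pos _).le (Real.exp_pos _).le hn0).1 h5
    linarith [Real.exp_le_exp.1 h6]

/-- **Exact asymptotic majorization (Jensen).**  If all Rényi entropies
`H_α` for `α ∈ [0, ∞]` are strictly ordered, then `p^{⊗n}` majorizes `q^{⊗n}`
for all sufficiently large `n`; conversely, if `p^{⊗n}` majorizes `q^{⊗n}` for
some `n ≥ 1` then the inequalities hold non-strictly. -/
theorem jensen_asymptotic_majorization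
    {m m' : ℕ} (p : Fin m → ℝ) (q : Fin m' → ℝ)
    (hp : IsProbVec p) (hq : IsProbVec q) :
    (((∀ α : ℝ, 0 ≤ α → Hent α p < Hent α q) ∧ HentInf p < HentInf q) →
      ∃ N : ℕ, ∀ n : ℕ, N ≤ n → Majorizes (kpow p n) (kpow q n)) ∧
    ((∃ n : ℕ, 1 ≤ n ∧ Majorizes (kpow p n) (kpow q n)) →
      (∀ α : ℝ, 0 ≤ α → Hent α p ≤ Hent α q) ∧ HentInf p ≤ HentInf q) := by
  exact ⟨fun h => direct p q hp hq h.1 h.2,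
    fun ⟨n, hn, h⟩ => converse p q hp hq n hn h⟩
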